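/- (Pfaffian/hafnian dichotomy) Let l be even, ln ≤ N, H(s) an ln×N matrix for 1 ≤ s ≤ r, A a 1-dimensional l-block array of size N, and define Q(I^(1),…,I^(r)) = ∑_{K ∈ C([N],l)} A(K) ∏_{s=1}^r det(H(s)_{I^(s),K}). Then Pf^[l,r](Q) = ∑_{P ∈ C([N],ln)} Pf^[l,1](A_P) ∏_{s=1}^r det(H(s)_{[ln],P}) if r is odd, and Pf^[l,r](Q) = ∑_{P ∈ C([N],ln)} Hf^[l,1](A_P) ∏_{s=1}^r det(H(s)_{[ln],P}) if r is even. -/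

import Mathlib

open scoped Classical
open Finset Equiv

noncomputable section

variable {F : Type*} [Field F] [CharZero F]

/-- The hyperdeterminant `det^[m]` of an `m`-dimensional tensor of size `n`:
`∑_{σ₁,…,σ_{m-1}} sgn(σ₁⋯σ_{m-1}) ∏_i A(i, σ₁ i, …, σ_{m-1} i)`, encoded as a sum over
`m`-tuples of permutations whose `0`-th component is forced to be the identity. -/
def hyperdet (m n : ℕ) (A : (Fin m → Fin n) → F) : F :=
  ∑ σ : Fin m → Equiv.Perm (Fin n),
    if (∀ k : Fin m, k.1 = 0 → σ k = 1) then
      (∏ k, ((Equiv.Perm.sign (σ k) : ℤ) : F)) * ∏ i, A fun k => σ k i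
    else 0

/-- `blk l n j i` is the `i`-th entry of the `j`-th consecutive block of length `l` in `[l*n]`. -/
def blk (l n : ℕ) (j : Fin n) (i : Fin l) : Fin (l * n) :=
  ⟨j.1 * l + i.1, by
    have hi := i.2; have hj := j.2
    calc j.1 * l + i.1 < (j.1 + 1) * l := by rw [Nat.add_mul, Nat.one_mul]; omega
      _ ≤ n * l := Nat.mul_le_mul_right l hj
      _ = l * n := Nat.mul_comm n l⟩

/-- A permutation of `[l*n]` is block-increasing if it is increasing on each of the
`n` consecutive blocks of length `l`. -/
def BlockInc (l n : ℕ) (σ : Equiv.Perm (Fin (l * n))) : Prop :=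
  ∀ j : Fin n, StrictMono fun i : Fin l => σ (blk l n j i)

/-- The `j`-th block of `σ`, as a subset of `[l*n]`. -/
def blkSet (l n : ℕ) (σ : Equiv.Perm (Fin (l * n))) (j : Fin n) : Finset (Fin (l * n)) :=
  Finset.image (fun i => σ (blk l n j i)) Finset.univ

/-- The hyperpfaffian `Pf^[l,m]` of an `m`-dimensional `l`-block array of size `l*n`
(the `m` dimensions are indexed by an arbitrary finite type `ι`). -/
def hyperpf (l n : ℕ) {ι : Type*} [Fintype ι]
    (B : (ι → Finset (Fin (l * n))) → F) : F :=
  (n.factorial : F)⁻¹ *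
    ∑ σ : ι → Equiv.Perm (Fin (l * n)),
      if ∀ s, BlockInc l n (σ s) then
        (∏ s, ((Equiv.Perm.sign (σ s) : ℤ) : F)) *
          ∏ k : Fin n, B fun s => blkSet l n (σ s) k
      else 0

/-- The hyperhafnian `Hf^[l,m]` (same sum as the hyperpfaffian, without signs). -/
def hyperhf (l n : ℕ) {ι : Type*} [Fintype ι]
    (B : (ι → Finset (Fin (l * n))) → F) : F :=
  (n.factorial : F)⁻¹ *
    ∑ σ : ι → Equiv.Perm (Fin (l * n)),
      if ∀ s, BlockInc l n (σ s) then
        ∏ k : Fin n, B fun s => blkSet l n (σ s) k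
      else 0

/-! Expand every value of `Q` in `Pf(Q)` and exchange the sums: for fixed `l`-sets `K₁, …, Kₙ` the
inner sums over block-increasing permutations are Laplace expansions, and give
`∏ₖ A(Kₖ) · ∏ₛ det H(s)_{[ln], K₁⋯Kₙ}`. The determinants vanish unless the concatenated sequence
`K₁⋯Kₙ` is injective, in which case it is the increasing enumeration of an `ln`-set `P` precomposed
with a block-increasing permutation `τ`. Each of the `r` determinants contributes one factor
`sgn τ`, and `(sgn τ)ʳ` is `sgn τ` or `1` according to the parity of `r`.

An `m`-subset of a linear order is represented by its increasing enumeration, an order embedding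
of `Fin m`. -/

section OrderEmbedding

variable {κ : Type*} [LinearOrder κ] {m : ℕ}

theorem exists_orderEmbedding_comp_perm {f : Fin m → κ} (hf : Function.Injective f) :
    ∃ (e : Fin m ↪o κ) (σ : Perm (Fin m)), f = e ∘ σ := by
  have hsort : StrictMono (f ∘ Tuple.sort f) :=
    (Tuple.monotone_sort f).strictMono_of_injective (hf.comp (Tuple.sort f).injective)
  refine ⟨OrderEmbedding.ofStrictMono _ hsort, (Tuple.sort f)⁻¹, funext fun i => ?_⟩
  simp

theorem orderEmbedding_comp_perm_inj {e e' : Fin m ↪o κ} {σ σ' : Perm (Fin m)} :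
    e ∘ σ = e' ∘ σ' ↔ e = e' ∧ σ = σ' := by
  refine ⟨fun h => ?_, by rintro ⟨rfl, rfl⟩; rfl⟩
  have he : e = e' := OrderEmbedding.range_inj.1 <| by
    rw [← σ.surjective.range_comp e, h, σ'.surjective.range_comp e']
  subst he
  exact ⟨rfl, DFunLike.coe_injective (e.injective.comp_left h)⟩

theorem sum_dite_card_eq_sum_orderEmbedding [Fintype κ] {M : Type*} [AddCommMonoid M]
    (f : Finset κ → (Fin m ↪o κ) → M) :
    (∑ K : Finset κ, if hK : K.card = m then f K (K.orderEmbOfFin hK) else 0) =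
      ∑ e : Fin m ↪o κ, f (univ.map e.toEmbedding) e := by
  refine (Fintype.sum_of_injective (fun e : Fin m ↪o κ => univ.map e.toEmbedding)
    (fun e e' h => ?_) _ _ (fun K hK => dif_neg fun hcard => hK ?_) fun e => ?_).symm
  · exact OrderEmbedding.range_inj.1 (by simpa using congrArg ((↑) : Finset κ → Set κ) h)
  · exact ⟨K.orderEmbOfFin hcard, map_orderEmbOfFin_univ K hcard⟩
  · have hcard : (univ.map e.toEmbedding).card = m := by simp
    rw [dif_pos hcard, ← orderEmbOfFin_unique' hcard (f := e) (by simp)]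

end OrderEmbedding

section Blocks

variable {l n : ℕ}

/-- The decomposition of `[l*n]` into `n` consecutive blocks of length `l`. -/
def blockEquiv (l n : ℕ) : Fin n × Fin l ≃ Fin (l * n) :=
  finProdFinEquiv.trans (finCongr (mul_comm n l))

@[simp]
theorem blockEquiv_apply (x : Fin n × Fin l) : blockEquiv l n x = blk l n x.1 x.2 :=
  Fin.ext <| by
    simp only [blockEquiv, blk, trans_apply, finCongr_apply, Fin.val_cast,
      finProdFinEquiv_apply_val]
    ring

@[simp]
theorem blockEquiv_symm_blk (k : Fin n) (i : Fin l) :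
    (blockEquiv l n).symm (blk l n k i) = (k, i) := by
  rw [symm_apply_eq, blockEquiv_apply]

theorem blk_injective (k : Fin n) : Function.Injective (blk l n k) := fun i j h => by
  simpa using congrArg (blockEquiv l n).symm h

theorem funext_blk {α : Type*} {f g : Fin (l * n) → α} (h : ∀ k, f ∘ blk l n k = g ∘ blk l n k) :
    f = g := by
  refine (blockEquiv l n).surjective.injective_comp_right (funext fun x => ?_)
  simpa using congrFun (h x.1) x.2

theorem prod_blk {M : Type*} [CommMonoid M] (f : Fin (l * n) → M) :
    ∏ x, f x = ∏ k, ∏ i, f (blk l n k i) := by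
  simp [← (blockEquiv l n).prod_comp, Fintype.prod_prod_type]

/-- The permutation of `[l*n]` that permutes the `k`-th block by `ρ k`. -/
def blockPerm (ρ : Fin n → Perm (Fin l)) : Perm (Fin (l * n)) :=
  (blockEquiv l n).permCongr (prodCongrRight ρ)

@[simp]
theorem blockPerm_blk (ρ : Fin n → Perm (Fin l)) (k : Fin n) (i : Fin l) :
    blockPerm ρ (blk l n k i) = blk l n k (ρ k i) := by
  simp [blockPerm, permCongr_apply]

theorem sign_blockPerm (ρ : Fin n → Perm (Fin l)) :
    Perm.sign (blockPerm ρ) = ∏ k, Perm.sign (ρ k) := by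
  simp [blockPerm, Perm.sign_permCongr, Perm.sign_prodCongrRight]

/-- The concatenation of `n` sequences of length `l`. -/
def blockConcat {α : Type*} (f : Fin n → Fin l → α) : Fin (l * n) → α :=
  Function.uncurry f ∘ (blockEquiv l n).symm

@[simp]
theorem blockConcat_blk {α : Type*} (f : Fin n → Fin l → α) (k : Fin n) (i : Fin l) :
    blockConcat f (blk l n k i) = f k i := by
  simp [blockConcat]

end Blocks

section BlockIncPerm

variable {l n : ℕ}

/-- The block-increasing permutations of `[l*n]`, which index the sums defining hyperpfaffians and
hyperhafnians. -/
abbrev BlockIncPerm (l n : ℕ) : Type := {σ : Perm (Fin (l * n)) // BlockInc l n σ}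

/-- The increasing enumeration of the `k`-th block of a block-increasing permutation. -/
def blockEmb (σ : BlockIncPerm l n) (k : Fin n) : Fin l ↪o Fin (l * n) :=
  OrderEmbedding.ofStrictMono _ (σ.2 k)

@[simp]
theorem blockEmb_apply (σ : BlockIncPerm l n) (k : Fin n) (i : Fin l) :
    blockEmb σ k i = σ.1 (blk l n k i) := rfl

theorem map_blockEmb_univ (σ : BlockIncPerm l n) (k : Fin n) :
    univ.map (blockEmb σ k).toEmbedding = blkSet l n σ.1 k := by
  rw [map_eq_image, blkSet]
  rfl

theorem card_blkSet (σ : BlockIncPerm l n) (k : Fin n) : (blkSet l n σ.1 k).card = l := by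
  simp [← map_blockEmb_univ]

theorem orderEmbOfFin_blkSet (σ : BlockIncPerm l n) (k : Fin n) :
    (blkSet l n σ.1 k).orderEmbOfFin (card_blkSet σ k) = blockEmb σ k :=
  (orderEmbOfFin_unique' _ (by simp [← map_blockEmb_univ])).symm

theorem blockIncPerm_mul_blockPerm_bijective :
    Function.Bijective fun x : BlockIncPerm l n × (Fin n → Perm (Fin l)) =>
      x.1.1 * blockPerm x.2 := by
  constructor
  · rintro ⟨σ, ρ⟩ ⟨σ', ρ'⟩ h
    have hblock (k : Fin n) : blockEmb σ k = blockEmb σ' k ∧ ρ k = ρ' k := by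
      refine orderEmbedding_comp_perm_inj.1 (funext fun i => ?_)
      simpa using DFunLike.congr_fun h (blk l n k i)
    have hσ : σ.1 = σ'.1 := DFunLike.coe_injective <|
      funext_blk fun k => congrArg DFunLike.coe (hblock k).1
    exact Prod.ext (Subtype.ext hσ) (funext fun k => (hblock k).2)
  · intro π
    have hsorted (k : Fin n) :
        ∃ (e : Fin l ↪o Fin (l * n)) (ρ : Perm (Fin l)), π ∘ blk l n k = e ∘ ρ :=
      exists_orderEmbedding_comp_perm (π.injective.comp (blk_injective k))
    choose e ρ hπ using hsorted
    have hblk (k : Fin n) (i : Fin l) : (π * (blockPerm ρ)⁻¹) (blk l n k i) = e k i := by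
      have hρ : (blockPerm ρ)⁻¹ (blk l n k i) = blk l n k ((ρ k)⁻¹ i) :=
        Perm.inv_eq_iff_eq.2 (by simp)
      rw [Perm.mul_apply, hρ]
      simpa using congrFun (hπ k) ((ρ k)⁻¹ i)
    refine ⟨(⟨π * (blockPerm ρ)⁻¹, fun k => ?_⟩, ρ), inv_mul_cancel_right π _⟩
    simpa only [hblk] using (e k).strictMono

theorem det_eq_sum_blockIncPerm {R : Type*} [CommRing R]
    (M : Matrix (Fin (l * n)) (Fin (l * n)) R) :
    M.det = ∑ σ : BlockIncPerm l n, ((Perm.sign σ.1 : ℤ) : R) *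
      ∏ k, (M.submatrix (blockEmb σ k) (blk l n k)).det := by
  rw [Matrix.det_apply', ← (ofBijective _ blockIncPerm_mul_blockPerm_bijective).sum_comp,
    Fintype.sum_prod_type]
  refine sum_congr rfl fun σ _ => ?_
  simp only [Matrix.det_apply', Fintype.prod_sum]
  rw [mul_sum]
  refine sum_congr rfl fun ρ _ => ?_
  simp only [ofBijective_apply, Perm.sign_mul, sign_blockPerm, prod_blk, Perm.mul_apply,
    blockPerm_blk, prod_mul_distrib, Matrix.submatrix_apply, blockEmb_apply]
  push_cast
  ring

end BlockIncPerm

section BlockRestrict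

variable {l n : ℕ} {κ : Type*} [LinearOrder κ]

/-- The blocks of a block-increasing permutation, read inside the subset enumerated by `e`. -/
def blockRestrict (e : Fin (l * n) ↪o κ) (τ : BlockIncPerm l n) (k : Fin n) : Fin l ↪o κ :=
  (blockEmb τ k).trans e

theorem map_blockRestrict_univ (e : Fin (l * n) ↪o κ) (τ : BlockIncPerm l n) (k : Fin n) :
    univ.map (blockRestrict e τ k).toEmbedding = (blkSet l n τ.1 k).map e.toEmbedding := by
  rw [← map_blockEmb_univ, map_map]
  rfl

theorem blockConcat_blockRestrict (e : Fin (l * n) ↪o κ) (τ : BlockIncPerm l n) :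
    blockConcat (fun k => ⇑(blockRestrict e τ k)) = e ∘ τ.1 :=
  funext_blk fun k => by ext i; simp [blockRestrict]

theorem blockRestrict_injective : Function.Injective
    fun x : (Fin (l * n) ↪o κ) × BlockIncPerm l n => blockRestrict x.1 x.2 := by
  rintro ⟨e, τ⟩ ⟨e', τ'⟩ (h : blockRestrict e τ = blockRestrict e' τ')
  obtain ⟨he, hτ⟩ := orderEmbedding_comp_perm_inj.1 <| show e ∘ τ.1 = e' ∘ τ'.1 by
    rw [← blockConcat_blockRestrict, h, blockConcat_blockRestrict]
  exact Prod.ext he (Subtype.ext hτ)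

theorem exists_blockRestrict_eq {K : Fin n → Fin l ↪o κ}
    (hK : Function.Injective (blockConcat fun k => ⇑(K k))) :
    ∃ (e : Fin (l * n) ↪o κ) (τ : BlockIncPerm l n), blockRestrict e τ = K := by
  obtain ⟨e, σ, hσ⟩ := exists_orderEmbedding_comp_perm hK
  have hblk (k : Fin n) (i : Fin l) : e (σ (blk l n k i)) = K k i := by
    simpa using (congrFun hσ (blk l n k i)).symm
  have hinc : BlockInc l n σ := fun k i j hij => by
    rw [← e.lt_iff_lt, hblk, hblk]
    exact (K k).strictMono hij
  exact ⟨e, ⟨σ, hinc⟩, funext fun k => DFunLike.ext _ _ (hblk k)⟩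

theorem sum_eq_sum_blockRestrict [Fintype κ] {M : Type*} [AddCommMonoid M]
    (f : (Fin n → Fin l ↪o κ) → M)
    (hf : ∀ K : Fin n → Fin l ↪o κ, ¬ Function.Injective (blockConcat fun k => ⇑(K k)) → f K = 0) :
    ∑ K, f K = ∑ e : Fin (l * n) ↪o κ, ∑ τ : BlockIncPerm l n, f (blockRestrict e τ) := by
  rw [← Fintype.sum_prod_type']
  refine (Fintype.sum_of_injective _ blockRestrict_injective _ _ (fun K hK => ?_)
    fun _ => rfl).symm
  refine hf K fun hinj => hK ?_
  obtain ⟨e, τ, h⟩ := exists_blockRestrict_eq hinj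
  exact ⟨(e, τ), h⟩

end BlockRestrict

section MinorSum

variable {R : Type*} [CommRing R]

theorem det_submatrix_eq_zero_of_not_injective {m α : Type*} [Fintype m] [DecidableEq m]
    (H : Matrix m α R) {f : m → α} (hf : ¬ Function.Injective f) :
    (H.submatrix id f).det = 0 := by
  obtain ⟨x, y, hxy, hne⟩ := Function.not_injective_iff.1 hf
  exact Matrix.det_zero_of_column_eq hne fun a => by simp [hxy]

variable {l n : ℕ} {ι κ : Type*} [Fintype ι] [LinearOrder κ]

theorem det_submatrix_blockConcat (H : Matrix (Fin (l * n)) κ R) (K : Fin n → Fin l ↪o κ) :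
    (H.submatrix id (blockConcat fun k => ⇑(K k))).det =
      ∑ σ : BlockIncPerm l n, ((Perm.sign σ.1 : ℤ) : R) *
        ∏ k, (H.submatrix (blockEmb σ k) (K k)).det := by
  have hminor (σ : BlockIncPerm l n) (k : Fin n) :
      (H.submatrix id (blockConcat fun k => ⇑(K k))).submatrix (blockEmb σ k) (blk l n k) =
        H.submatrix (blockEmb σ k) (K k) := by
    ext a b
    simp
  simp only [det_eq_sum_blockIncPerm, hminor]

theorem det_submatrix_blockRestrict (H : Matrix (Fin (l * n)) κ R) (e : Fin (l * n) ↪o κ)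
    (τ : BlockIncPerm l n) :
    (H.submatrix id (blockConcat fun k => ⇑(blockRestrict e τ k))).det =
      ((Perm.sign τ.1 : ℤ) : R) * (H.submatrix id e).det := by
  rw [blockConcat_blockRestrict, ← Matrix.det_permute', Matrix.submatrix_submatrix]
  rfl

variable [Fintype κ]

theorem sum_sign_mul_prod_sum_minors (H : ι → Matrix (Fin (l * n)) κ R)
    (A : (Fin l ↪o κ) → R) :
    ∑ σ : ι → BlockIncPerm l n, (∏ s, ((Perm.sign (σ s).1 : ℤ) : R)) *
        ∏ k, ∑ K : Fin l ↪o κ, A K * ∏ s, ((H s).submatrix (blockEmb (σ s) k) K).det =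
      ∑ K : Fin n → Fin l ↪o κ, (∏ k, A (K k)) *
        ∏ s, ((H s).submatrix id (blockConcat fun k => ⇑(K k))).det := by
  simp only [det_submatrix_blockConcat, Fintype.prod_sum, mul_sum]
  rw [sum_comm]
  refine sum_congr rfl fun K _ => sum_congr rfl fun σ _ => ?_
  simp only [prod_mul_distrib]
  rw [prod_comm]
  ring

theorem sum_sign_mul_prod_sum_minors_eq_sum_maximal_minors [Nonempty ι]
    (H : ι → Matrix (Fin (l * n)) κ R) (A : (Fin l ↪o κ) → R) :
    ∑ σ : ι → BlockIncPerm l n, (∏ s, ((Perm.sign (σ s).1 : ℤ) : R)) *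
        ∏ k, ∑ K : Fin l ↪o κ, A K * ∏ s, ((H s).submatrix (blockEmb (σ s) k) K).det =
      ∑ e : Fin (l * n) ↪o κ, (∑ τ : BlockIncPerm l n,
        ((Perm.sign τ.1 : ℤ) : R) ^ Fintype.card ι * ∏ k, A (blockRestrict e τ k)) *
          ∏ s, ((H s).submatrix id e).det := by
  rw [sum_sign_mul_prod_sum_minors, sum_eq_sum_blockRestrict]
  · refine sum_congr rfl fun e _ => ?_
    rw [sum_mul]
    refine sum_congr rfl fun τ _ => ?_
    simp only [det_submatrix_blockRestrict, prod_mul_distrib, prod_const, card_univ]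
    ring
  · intro K hK
    simp [det_submatrix_eq_zero_of_not_injective _ hK]

end MinorSum

section SignPow

variable {R α : Type*} [Ring R] [Fintype α] [DecidableEq α] {m : ℕ}

theorem cast_sign_pow_of_even (hm : Even m) (σ : Perm α) : ((Perm.sign σ : ℤ) : R) ^ m = 1 := by
  rcases Int.units_eq_one_or (Perm.sign σ) with h | h <;> simp [h, hm.neg_one_pow]

theorem cast_sign_pow_of_odd (hm : Odd m) (σ : Perm α) :
    ((Perm.sign σ : ℤ) : R) ^ m = ((Perm.sign σ : ℤ) : R) := by
  rcases Int.units_eq_one_or (Perm.sign σ) with h | h <;> simp [h, hm.neg_one_pow]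

end SignPow

section HyperPfaffian

variable {E : Type*} [Field E] {l n : ℕ} {ι κ : Type*} [Fintype ι]

theorem sum_ite_forall_eq_sum_subtype {α M : Type*} [DecidableEq ι] [Fintype α]
    [AddCommMonoid M] (p : α → Prop) [DecidablePred p] (f : (ι → α) → M) :
    (∑ σ : ι → α, if ∀ s, p (σ s) then f σ else 0) =
      ∑ σ : ι → {a // p a}, f fun s => (σ s).1 := by
  rw [← sum_filter, ← subtypePiEquivPi.sum_comp]
  exact sum_subtype _ (by simp) f

theorem hyperpf_eq_sum_blockIncPerm (B : (ι → Finset (Fin (l * n))) → E) :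
    hyperpf l n B = (n.factorial : E)⁻¹ * ∑ σ : ι → BlockIncPerm l n,
      (∏ s, ((Perm.sign (σ s).1 : ℤ) : E)) * ∏ k, B fun s => blkSet l n (σ s).1 k := by
  rw [hyperpf, sum_ite_forall_eq_sum_subtype (BlockInc l n)]

theorem hyperhf_eq_sum_blockIncPerm (B : (ι → Finset (Fin (l * n))) → E) :
    hyperhf l n B = (n.factorial : E)⁻¹ * ∑ σ : ι → BlockIncPerm l n,
      ∏ k, B fun s => blkSet l n (σ s).1 k := by
  rw [hyperhf, sum_ite_forall_eq_sum_subtype (BlockInc l n)]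

theorem hyperpf_unique [Unique ι] (B : (ι → Finset (Fin (l * n))) → E) :
    hyperpf l n B = (n.factorial : E)⁻¹ * ∑ τ : BlockIncPerm l n,
      ((Perm.sign τ.1 : ℤ) : E) * ∏ k, B fun _ => blkSet l n τ.1 k := by
  rw [hyperpf_eq_sum_blockIncPerm, ← (funUnique ι (BlockIncPerm l n)).symm.sum_comp]
  simp [funUnique]

theorem hyperhf_unique [Unique ι] (B : (ι → Finset (Fin (l * n))) → E) :
    hyperhf l n B = (n.factorial : E)⁻¹ * ∑ τ : BlockIncPerm l n,
      ∏ k, B fun _ => blkSet l n τ.1 k := by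
  rw [hyperhf_eq_sum_blockIncPerm, ← (funUnique ι (BlockIncPerm l n)).symm.sum_comp]
  simp [funUnique]

variable [LinearOrder κ] [Fintype κ]

theorem hyperpf_sum_minors_eq_sum_maximal_minors [Nonempty ι]
    (H : ι → Matrix (Fin (l * n)) κ E) (A : Finset κ → E) (Q : (ι → Finset (Fin (l * n))) → E)
    (hQ : ∀ I : ι → Finset (Fin (l * n)), ∀ hI : ∀ s, (I s).card = l,
      Q I = ∑ K : Finset κ, if hK : K.card = l then
        A K * ∏ s, ((H s).submatrix ((I s).orderEmbOfFin (hI s)) (K.orderEmbOfFin hK)).det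
      else 0) :
    hyperpf l n Q = ∑ e : Fin (l * n) ↪o κ,
      ((n.factorial : E)⁻¹ * ∑ τ : BlockIncPerm l n, ((Perm.sign τ.1 : ℤ) : E) ^ Fintype.card ι *
        ∏ k, A ((blkSet l n τ.1 k).map e.toEmbedding)) * ∏ s, ((H s).submatrix id e).det := by
  have hQ_blkSet (σ : ι → BlockIncPerm l n) (k : Fin n) :
      Q (fun s => blkSet l n (σ s).1 k) = ∑ K : Fin l ↪o κ,
        A (univ.map K.toEmbedding) * ∏ s, ((H s).submatrix (blockEmb (σ s) k) K).det := by
    rw [hQ _ fun s => card_blkSet (σ s) k]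
    simp only [orderEmbOfFin_blkSet]
    exact sum_dite_card_eq_sum_orderEmbedding fun K e =>
      A K * ∏ s, ((H s).submatrix (blockEmb (σ s) k) e).det
  simp only [hyperpf_eq_sum_blockIncPerm, hQ_blkSet]
  rw [sum_sign_mul_prod_sum_minors_eq_sum_maximal_minors H fun K => A (univ.map K.toEmbedding),
    mul_sum]
  simp only [map_blockRestrict_univ, mul_assoc]

theorem pf_hf_dichotomy_general [Nonempty ι]
    (H : ι → Matrix (Fin (l * n)) κ E) (A : Finset κ → E) (Q : (ι → Finset (Fin (l * n))) → E)
    (hQ : ∀ I : ι → Finset (Fin (l * n)), ∀ hI : ∀ s, (I s).card = l,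
      Q I = ∑ K : Finset κ, if hK : K.card = l then
        A K * ∏ s, ((H s).submatrix ((I s).orderEmbOfFin (hI s)) (K.orderEmbOfFin hK)).det
      else 0) :
    (Odd (Fintype.card ι) → hyperpf l n Q =
      ∑ P : Finset κ, if hP : P.card = l * n then
        hyperpf l n (fun I : Fin 1 → Finset (Fin (l * n)) =>
            A ((I 0).map (P.orderEmbOfFin hP).toEmbedding)) *
          ∏ s, ((H s).submatrix id (P.orderEmbOfFin hP)).det
      else 0) ∧
    (Even (Fintype.card ι) → hyperpf l n Q =
      ∑ P : Finset κ, if hP : P.card = l * n then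
        hyperhf l n (fun I : Fin 1 → Finset (Fin (l * n)) =>
            A ((I 0).map (P.orderEmbOfFin hP).toEmbedding)) *
          ∏ s, ((H s).submatrix id (P.orderEmbOfFin hP)).det
      else 0) := by
  rw [hyperpf_sum_minors_eq_sum_maximal_minors H A Q hQ]
  constructor <;> intro hcard
  · rw [sum_dite_card_eq_sum_orderEmbedding fun _ e =>
      hyperpf l n (fun I : Fin 1 → Finset (Fin (l * n)) => A ((I 0).map e.toEmbedding)) *
        ∏ s, ((H s).submatrix id e).det]
    simp only [hyperpf_unique, cast_sign_pow_of_odd hcard]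
  · rw [sum_dite_card_eq_sum_orderEmbedding fun _ e =>
      hyperhf l n (fun I : Fin 1 → Finset (Fin (l * n)) => A ((I 0).map e.toEmbedding)) *
        ∏ s, ((H s).submatrix id e).det]
    simp only [hyperhf_unique, cast_sign_pow_of_even hcard, one_mul]

end HyperPfaffian

/-- Pfaffian/hafnian dichotomy according to the parity of `r`. -/
theorem pf_hf_dichotomy (l r n N : ℕ) (hl : Even l) (hl0 : 0 < l) (hr : 0 < r)
    (hn : 0 < n) (hN : l * n ≤ N)
    (H : Fin r → Matrix (Fin (l * n)) (Fin N) F)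
    (A : Finset (Fin N) → F)
    (Q : (Fin r → Finset (Fin (l * n))) → F)
    (hQ : ∀ I : Fin r → Finset (Fin (l * n)), ∀ hI : ∀ s, (I s).card = l,
      Q I = ∑ K : Finset (Fin N),
        if hK : K.card = l then
          A K * ∏ s : Fin r,
            Matrix.det (Matrix.of fun a b : Fin l =>
              H s ((I s).orderEmbOfFin (hI s) a) (K.orderEmbOfFin hK b))
        else 0) :
    (Odd r → hyperpf l n Q
      = ∑ P : Finset (Fin N),
          if hP : P.card = l * n then
            hyperpf l n (fun I : Fin 1 → Finset (Fin (l * n)) =>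
                A ((I 0).map (P.orderEmbOfFin hP).toEmbedding)) *
              ∏ s : Fin r,
                Matrix.det (Matrix.of fun a (b : Fin (l * n)) =>
                  H s a (P.orderEmbOfFin hP b))
          else 0)
    ∧ (Even r → hyperpf l n Q
      = ∑ P : Finset (Fin N),
          if hP : P.card = l * n then
            hyperhf l n (fun I : Fin 1 → Finset (Fin (l * n)) =>
                A ((I 0).map (P.orderEmbOfFin hP).toEmbedding)) *
              ∏ s : Fin r,
                Matrix.det (Matrix.of fun a (b : Fin (l * n)) =>
                  H s a (P.orderEmbOfFin hP b))
          else 0) := by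
  have : Nonempty (Fin r) := Fin.pos_iff_nonempty.1 hr
  simpa only [Fintype.card_fin] using! pf_hf_dichotomy_general H A Q hQ
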